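/- arXiv:2102.11496 — 2 statements merged into one kernel-verified Lean document; each statement's English description precedes it below -/
import Mathlib

section
/- There exist ε > 0 and c_q < q such that for every δ > 0 the following holds for all sufficiently large n: every set A ⊆ F_q^n that is an (ε,δ)-cap set for some admissible tuple (a,b,c) satisfies |A| ≤ c_q^n. -/
/-!
First the problem is reduced to cap sets. Join `x` to `y` in `A'` when `a x + b y + c z = 0` for
some `z ∈ A'`. Out-degrees are less than `|A| ^ ε`, so greedily there is an independent set
`S ⊆ A'` with `|A'| ≤ (2 |A| ^ ε + 1) |S|`, and independence makes every solution in `S` constant.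

The size of `S` is bounded by the slice rank method. The indicator of `a x + b y + c z = 0` is the
product over the coordinates of the polynomials `1 - (a xᵢ + b yᵢ + c zᵢ) ^ (q - 1)`. Each monomial
of this product has degree at most `(q - 1) n / 3` in `x`, in `y` or in `z`, so its slice rank is
at most three times the number of such monomials in one variable, which is at most `C ^ n` for some
`C < q`. Restricted to `S` it is a diagonal tensor, of slice rank `|S|`.

Since `|A| ^ ε ≤ q ^ (ε n)`, choosing `ε` with `q ^ ε * C < q` leaves room for a base `c_q < q`.
-/

open Finset

section SliceRank

variable {R X Y Z : Type*}

/-- `SliceRankLE T r` says that the tensor `T` has slice rank at most `r`: it is a sum of `r`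
slices, each the product of a function of one variable and a function of the other two. The slices
are grouped by the variable they separate. -/
def SliceRankLE [Semiring R] (T : X → Y → Z → R) (r : ℕ) : Prop :=
  ∃ (k l m : ℕ) (f₁ : Fin k → X → R) (g₁ : Fin k → Y → Z → R)
    (f₂ : Fin l → Y → R) (g₂ : Fin l → X → Z → R)
    (f₃ : Fin m → Z → R) (g₃ : Fin m → X → Y → R), k + l + m ≤ r ∧
      ∀ x y z, T x y z =
        ∑ i, f₁ i x * g₁ i y z + ∑ i, f₂ i y * g₂ i x z + ∑ i, f₃ i z * g₃ i x y

theorem SliceRankLE.of_fintype [Semiring R] {I J K : Type*} [Fintype I] [Fintype J] [Fintype K]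
    {T : X → Y → Z → R} (f₁ : I → X → R) (g₁ : I → Y → Z → R) (f₂ : J → Y → R) (g₂ : J → X → Z → R)
    (f₃ : K → Z → R) (g₃ : K → X → Y → R)
    (hT : ∀ x y z, T x y z =
      ∑ i, f₁ i x * g₁ i y z + ∑ j, f₂ j y * g₂ j x z + ∑ k, f₃ k z * g₃ k x y) :
    SliceRankLE T (Fintype.card I + Fintype.card J + Fintype.card K) := by
  let eI := (Fintype.equivFin I).symm
  let eJ := (Fintype.equivFin J).symm
  let eK := (Fintype.equivFin K).symm
  refine ⟨_, _, _, f₁ ∘ eI, g₁ ∘ eI, f₂ ∘ eJ, g₂ ∘ eJ, f₃ ∘ eK, g₃ ∘ eK, le_rfl, fun x y z ↦ ?_⟩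
  simp only [hT, Function.comp_apply, eI.sum_comp fun i ↦ f₁ i x * g₁ i y z,
    eJ.sum_comp fun j ↦ f₂ j y * g₂ j x z, eK.sum_comp fun k ↦ f₃ k z * g₃ k x y]

theorem SliceRankLE.comp [Semiring R] {X' Y' Z' : Type*} {T : X → Y → Z → R} {r : ℕ}
    (hT : SliceRankLE T r) (α : X' → X) (β : Y' → Y) (γ : Z' → Z) :
    SliceRankLE (fun x y z ↦ T (α x) (β y) (γ z)) r := by
  obtain ⟨k, l, m, f₁, g₁, f₂, g₂, f₃, g₃, hr, hT⟩ := hT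
  exact ⟨k, l, m, fun i ↦ f₁ i ∘ α, fun i y z ↦ g₁ i (β y) (γ z),
    fun i ↦ f₂ i ∘ β, fun i x z ↦ g₂ i (α x) (γ z),
    fun i ↦ f₃ i ∘ γ, fun i x y ↦ g₃ i (α x) (β y), hr, fun x y z ↦ hT _ _ _⟩

theorem sum_comp_mul_eq_sum_fiberwise [NonUnitalNonAssocSemiring R] {κ E : Type*} [DecidableEq E]
    {Φ : Finset κ} {M : Finset E} {u : κ → E} (hu : ∀ φ ∈ Φ, u φ ∈ M) (f : E → R) (g : κ → R) :
    ∑ φ ∈ Φ, f (u φ) * g φ = ∑ e : M, f e * ∑ φ ∈ Φ with u φ = e, g φ := by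
  rw [← sum_fiberwise_of_maps_to hu, ← sum_coe_sort M]
  refine sum_congr rfl fun e _ ↦ ?_
  rw [mul_sum]
  exact sum_congr rfl fun φ hφ ↦ by rw [(mem_filter.mp hφ).2]

/-- Each term is charged to one of its factors indexed by `M`; collecting the terms charged to the
same factor gives at most `#M` slices for each of the three variables. -/
theorem sliceRankLE_sum_of_mem_or [CommSemiring R] {κ E : Type*} (Φ : Finset κ) (M : Finset E)
    (c : κ → R) (f : E → X → R) (g : E → Y → R) (h : E → Z → R) (u v w : κ → E)
    (hM : ∀ φ ∈ Φ, u φ ∈ M ∨ v φ ∈ M ∨ w φ ∈ M) :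
    SliceRankLE (fun x y z ↦ ∑ φ ∈ Φ, c φ * (f (u φ) x * g (v φ) y * h (w φ) z)) (3 * #M) := by
  classical
  let Φu := {φ ∈ Φ | u φ ∈ M}
  let Φv := {φ ∈ {φ ∈ Φ | u φ ∉ M} | v φ ∈ M}
  let Φw := {φ ∈ {φ ∈ Φ | u φ ∉ M} | v φ ∉ M}
  have hu : ∀ φ ∈ Φu, u φ ∈ M := fun φ hφ ↦ (mem_filter.mp hφ).2
  have hv : ∀ φ ∈ Φv, v φ ∈ M := fun φ hφ ↦ (mem_filter.mp hφ).2
  have hw : ∀ φ ∈ Φw, w φ ∈ M := by grind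
  convert SliceRankLE.of_fintype
    (fun (e : M) x ↦ f e x) (fun e y z ↦ ∑ φ ∈ Φu with u φ = e, c φ * (g (v φ) y * h (w φ) z))
    (fun (e : M) y ↦ g e y) (fun e x z ↦ ∑ φ ∈ Φv with v φ = e, c φ * (f (u φ) x * h (w φ) z))
    (fun (e : M) z ↦ h e z) (fun e x y ↦ ∑ φ ∈ Φw with w φ = e, c φ * (f (u φ) x * g (v φ) y))
    fun x y z ↦ ?_ using 1
  · rw [Fintype.card_coe]; ring
  · rw [← sum_comp_mul_eq_sum_fiberwise hu (f · x), ← sum_comp_mul_eq_sum_fiberwise hv (g · y),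
      ← sum_comp_mul_eq_sum_fiberwise hw (h · z), ← sum_filter_add_sum_filter_not Φ (u · ∈ M),
      ← sum_filter_add_sum_filter_not {φ ∈ Φ | u φ ∉ M} (v · ∈ M), ← add_assoc]
    congr 1
    · congr 1 <;> exact sum_congr rfl fun φ _ ↦ by ring
    · exact sum_congr rfl fun φ _ ↦ by ring

end SliceRank

/-- Restriction to the support of a vector `w ∈ W` with maximal support is injective on `W`: a
nonzero `v ∈ W` vanishing there would make the support of `w + v` strictly larger. -/
theorem exists_mem_finrank_le_card_ne_zero {K ι : Type*} [DivisionRing K] [DecidableEq K]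
    [Fintype ι] (W : Submodule K (ι → K)) :
    ∃ w ∈ W, Module.finrank K W ≤ #{i | w i ≠ 0} := by
  classical
  let supp (w : W) : Finset ι := {i | w.1 i ≠ 0}
  obtain ⟨_, ⟨w, rfl⟩, hmax⟩ := (Set.range supp).toFinite.exists_maximal ⟨_, 0, rfl⟩
  let res : W →ₗ[K] (supp w → K) := LinearMap.funLeft K K Subtype.val ∘ₗ W.subtype
  have hres : Function.Injective res := by
    rw [injective_iff_map_eq_zero]
    intro v hv
    have hvw : ∀ i ∈ supp w, v.1 i = 0 := fun i hi ↦ congrFun hv ⟨i, hi⟩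
    have hle : supp w ≤ supp (w + v) := fun i hi ↦ by
      have hwi : w.1 i ≠ 0 := by simpa [supp] using hi
      simp [supp, hvw i hi, hwi]
    ext i
    by_contra hvi
    have hi : i ∉ supp w := fun hi ↦ hvi (hvw i hi)
    have hwi : w.1 i = 0 := by simpa [supp] using hi
    exact hi (hmax ⟨w + v, rfl⟩ hle (by simpa [supp, hwi] using hvi))
  refine ⟨w, w.2, ?_⟩
  calc Module.finrank K W ≤ Module.finrank K (supp w → K) :=
        LinearMap.finrank_le_finrank_of_injective hres
    _ = #(supp w) := by rw [Module.finrank_fintype_fun_eq_card, Fintype.card_coe]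

theorem exists_mulVec_eq_zero_card_le {K m n : Type*} [Field K] [DecidableEq K]
    [Fintype m] [Fintype n] (A : Matrix m n K) :
    ∃ h : n → K, A.mulVec h = 0 ∧ Fintype.card n ≤ Fintype.card m + #{i | h i ≠ 0} := by
  obtain ⟨h, hA, hcard⟩ :=
    exists_mem_finrank_le_card_ne_zero (LinearMap.ker A.mulVecLin)
  refine ⟨h, hA, ?_⟩
  have hrank : A.rank + Module.finrank K (LinearMap.ker A.mulVecLin) = Fintype.card n := by
    simpa [Matrix.rank] using A.mulVecLin.finrank_range_add_finrank_ker
  have := A.rank_le_card_height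
  omega

/-- Tao's slice rank bound. Contracting the first variable against a vector `h` orthogonal to all
`f₁ i` kills the slices that separate it; what is left is a diagonal matrix of rank at most `l + m`,
while `h` can be chosen with at least `card S - k` nonzero entries. -/
theorem SliceRankLE.card_le_of_diagonal {K S : Type*} [Field K] [Fintype S] [DecidableEq S]
    {d : S → K} (hd : ∀ x, d x ≠ 0) {r : ℕ}
    (hT : SliceRankLE (fun x y z ↦ if x = y ∧ y = z then d x else 0) r) :
    Fintype.card S ≤ r := by
  classical
  obtain ⟨k, l, m, f₁, g₁, f₂, g₂, f₃, g₃, hr, hT⟩ := hT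
  obtain ⟨h, hf₁, hcard⟩ := exists_mulVec_eq_zero_card_le (Matrix.of f₁)
  have hf₁ (i) : ∑ x, h x * f₁ i x = 0 := by
    simpa [Matrix.mulVec, dotProduct, mul_comm] using congrFun hf₁ i
  let B : Matrix S (Fin l ⊕ Fin m) K :=
    .fromCols (.of fun y i ↦ f₂ i y) (.of fun y i ↦ ∑ x, h x * g₃ i x y)
  let C : Matrix (Fin l ⊕ Fin m) S K :=
    .fromRows (.of fun i z ↦ ∑ x, h x * g₂ i x z) (.of f₃)
  have hdiag : Matrix.diagonal (fun x ↦ h x * d x) = B * C := by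
    ext y z
    calc Matrix.diagonal (fun x ↦ h x * d x) y z
        = ∑ x, h x * (if x = y ∧ y = z then d x else 0) := by
          by_cases hyz : y = z <;> simp [hyz]
      _ = ∑ i, (∑ x, h x * f₁ i x) * g₁ i y z + ∑ i, f₂ i y * ∑ x, h x * g₂ i x z
          + ∑ i, (∑ x, h x * g₃ i x y) * f₃ i z := by
          simp only [hT, mul_add, sum_add_distrib, mul_sum, sum_mul]
          congr! 2 <;> rw [sum_comm] <;> congr! 2 <;> ring
      _ = (B * C) y z := by
          simp [hf₁, B, C, Matrix.mul_apply]
  have hrank : #{x | h x ≠ 0} ≤ l + m := by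
    calc #{x | h x ≠ 0} = (B * C).rank := by
          simp [← hdiag, Matrix.rank_diagonal, Fintype.card_subtype, hd]
      _ ≤ Fintype.card (Fin l ⊕ Fin m) :=
          (Matrix.rank_mul_le_left B C).trans B.rank_le_card_width
      _ = l + m := by simp
  simp only [Fintype.card_fin] at hcard
  omega

section LowExponents

/-- The exponents of the monomials in `ι` variables of degree at most `D` in each variable and
total degree at most `D * card ι / 3`, i.e. two thirds of the average `D * card ι / 2`. -/
def lowExponents (ι : Type*) [Fintype ι] [DecidableEq ι] (D : ℕ) : Finset (ι → ℕ) :=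
  {e ∈ Fintype.piFinset fun _ ↦ range (D + 1) | 3 * ∑ i, e i ≤ D * Fintype.card ι}

variable {ι : Type*} [Fintype ι] [DecidableEq ι]

theorem mem_lowExponents {D : ℕ} {e : ι → ℕ} :
    e ∈ lowExponents ι D ↔ (∀ i, e i ≤ D) ∧ 3 * ∑ i, e i ≤ D * Fintype.card ι := by
  simp [lowExponents]

/-- Chernoff's bound, from the generating function of the degree at `s ^ 3`. -/
theorem card_lowExponents_le (D : ℕ) {s : ℝ} (hs₀ : 0 < s) (hs₁ : s ≤ 1) :
    (#(lowExponents ι D) : ℝ) ≤ ((∑ j ∈ range (D + 1), s ^ (3 * j)) / s ^ D) ^ Fintype.card ι := by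
  rw [div_pow, le_div_iff₀ (by positivity), ← pow_mul, ← nsmul_eq_mul]
  calc #(lowExponents ι D) • s ^ (D * Fintype.card ι)
      ≤ ∑ e ∈ lowExponents ι D, ∏ i, s ^ (3 * e i) := by
        refine card_nsmul_le_sum _ _ _ fun e he ↦ ?_
        rw [prod_pow_eq_pow_sum, ← mul_sum]
        exact pow_le_pow_of_le_one hs₀.le hs₁ (mem_lowExponents.mp he).2
    _ ≤ ∑ e ∈ Fintype.piFinset fun _ : ι ↦ range (D + 1), ∏ i, s ^ (3 * e i) :=
        sum_le_sum_of_subset_of_nonneg (filter_subset _ _) fun e _ _ ↦ by positivity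
    _ = (∑ j ∈ range (D + 1), s ^ (3 * j)) ^ Fintype.card ι := by
        rw [← prod_univ_sum (fun _ ↦ range (D + 1)) fun _ j ↦ s ^ (3 * j), prod_const, card_univ]

/-- At `s = 1` the two sides agree, and the left-hand side has the larger derivative. -/
theorem exists_sum_pow_three_mul_lt {D : ℕ} (hD : D ≠ 0) :
    ∃ s : ℝ, 0 < s ∧ s < 1 ∧ ∑ j ∈ range (D + 1), s ^ (3 * j) < (D + 1) * s ^ D := by
  let f : ℝ → ℝ := fun s ↦ ∑ j ∈ range (D + 1), s ^ (3 * j) - (D + 1) * s ^ D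
  have hf : HasDerivAt f (D * (D + 1) / 2) 1 := by
    have hgauss : ∑ j ∈ range (D + 1), (j : ℝ) = D * (D + 1) / 2 := by
      rw [eq_div_iff two_ne_zero, mul_comm (D : ℝ), ← Nat.cast_sum]
      exact_mod_cast add_tsub_cancel_right D 1 ▸ sum_range_id_mul_two (D + 1)
    have hf' : HasDerivAt f (∑ j ∈ range (D + 1), ((3 * j : ℕ) : ℝ) * 1 ^ (3 * j - 1) -
        (D + 1) * (D * 1 ^ (D - 1))) 1 :=
      (HasDerivAt.fun_sum fun j _ ↦ hasDerivAt_pow (3 * j) (1 : ℝ)).sub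
        ((hasDerivAt_pow D (1 : ℝ)).const_mul _)
    convert hf' using 1
    simp only [one_pow, mul_one, Nat.cast_mul, ← mul_sum, hgauss]
    push_cast
    ring
  have hsign : ∀ᶠ s in nhds 1, SignType.sign (f s) = SignType.sign (s - 1) :=
    eventually_nhdsWithin_sign_eq_of_deriv_pos (by rw [hf.deriv]; positivity) (by simp [f])
  obtain ⟨s, ⟨hs, hs₀⟩, hs₁⟩ := (((hsign.and (lt_mem_nhds one_pos)).filter_mono
    nhdsWithin_le_nhds).and (self_mem_nhdsWithin (s := Set.Iio (1 : ℝ)))).exists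
  rw [sign_neg (sub_neg.mpr hs₁), sign_eq_neg_one_iff] at hs
  exact ⟨s, hs₀, hs₁, sub_neg.mp hs⟩

theorem exists_card_lowExponents_le_pow {D : ℕ} (hD : D ≠ 0) :
    ∃ C : ℝ, 0 < C ∧ C < D + 1 ∧
      ∀ n, (#(lowExponents (Fin n) D) : ℝ) ≤ C ^ n := by
  obtain ⟨s, hs₀, hs₁, hs⟩ := exists_sum_pow_three_mul_lt hD
  refine ⟨(∑ j ∈ range (D + 1), s ^ (3 * j)) / s ^ D, ?_, ?_, fun n ↦ ?_⟩
  · exact div_pos (sum_pos (fun j _ ↦ by positivity) nonempty_range_add_one) (by positivity)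
  · rwa [div_lt_iff₀ (by positivity)]
  · simpa using card_lowExponents_le (ι := Fin n) D hs₀ hs₁.le

end LowExponents

theorem exists_card_filter_le_of_forall_card_filter_le {α : Type*} (r : α → α → Prop)
    [DecidableRel r] {d : ℕ} {V : Finset α} (hV : V.Nonempty) (hd : ∀ x ∈ V, #{y ∈ V | r x y} ≤ d) :
    ∃ y ∈ V, #{x ∈ V | r x y} ≤ d := by
  refine exists_le_of_sum_le hV ?_
  calc ∑ y ∈ V, #{x ∈ V | r x y} = ∑ x ∈ V, #{y ∈ V | r x y} :=
        (sum_card_bipartiteAbove_eq_sum_card_bipartiteBelow r).symm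
    _ ≤ ∑ _x ∈ V, d := sum_le_sum hd

/-- Greedy choice: some vertex also has in-degree at most `d`; keep it, discard its at most `2 * d`
neighbours, and repeat. -/
theorem exists_pairwise_not_card_le_mul {α : Type*} (r : α → α → Prop) [DecidableRel r]
    {d : ℕ} (V : Finset α) (hV : ∀ x ∈ V, #{y ∈ V | r x y} ≤ d) :
    ∃ S ⊆ V, (S : Set α).Pairwise (fun x y ↦ ¬ r x y) ∧ #V ≤ (2 * d + 1) * #S := by
  classical
  induction V using Finset.strongInduction with
  | H V ih =>
  obtain rfl | hne := V.eq_empty_or_nonempty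
  · exact ⟨∅, by simp⟩
  obtain ⟨v, hv, hvd⟩ := exists_card_filter_le_of_forall_card_filter_le r hne hV
  let N := insert v ({y ∈ V | r v y} ∪ {x ∈ V | r x v})
  have hN : #N ≤ 2 * d + 1 := by
    calc #N ≤ #{y ∈ V | r v y} + #{x ∈ V | r x v} + 1 :=
          (card_insert_le _ _).trans (by gcongr; exact card_union_le _ _)
      _ ≤ 2 * d + 1 := by linarith [hV v hv]
  have hVN : V \ N ⊂ V := sdiff_ssubset (by grind) ⟨v, mem_insert_self _ _⟩
  obtain ⟨S, hSV, hS, hcard⟩ := ih (V \ N) hVN fun x hx ↦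
    (card_le_card (filter_subset_filter _ sdiff_subset)).trans (hV x (mem_sdiff.mp hx).1)
  have hvS : v ∉ S := by grind
  refine ⟨insert v S, by grind, ?_, ?_⟩
  · rw [coe_insert, Set.pairwise_insert]
    exact ⟨hS, by grind⟩
  · calc #V ≤ #(V \ N) + #N := card_le_card_sdiff_add_card
      _ ≤ (2 * d + 1) * #S + (2 * d + 1) := add_le_add hcard hN
      _ = (2 * d + 1) * #(insert v S) := by rw [card_insert_of_notMem hvS]; ring

theorem prod_one_sub_pow_card_sub_one {ι F : Type*} [Fintype ι] [Field F] [Fintype F]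
    [DecidableEq F] (t : ι → F) :
    ∏ i, (1 - t i ^ (Fintype.card F - 1)) = if t = 0 then 1 else 0 := by
  split_ifs with ht
  · simp [ht, Nat.sub_ne_zero_of_lt (Fintype.one_lt_card (α := F))]
  · obtain ⟨i, hi⟩ := Function.ne_iff.mp ht
    exact prod_eq_zero (mem_univ i) (by rw [FiniteField.pow_card_sub_one_eq_one _ hi, sub_self])

section CapSets

variable {ι : Type*} [Fintype ι] [DecidableEq ι]

/-- The three degrees of a monomial in the expansion of the product add up to at most
`D * card ι`, so one of them is at most a third of this. -/
theorem sliceRankLE_prod_eval {R : Type*} [CommSemiring R] {D : ℕ} {p : MvPolynomial (Fin 3) R}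
    (hp : p.totalDegree ≤ D) :
    SliceRankLE (fun x y z : ι → R ↦ ∏ i, MvPolynomial.eval ![x i, y i, z i] p)
      (3 * #(lowExponents ι D)) := by
  have hdeg : ∀ e ∈ p.support, e 0 + e 1 + e 2 ≤ D := fun e he ↦ by
    simpa [Finsupp.sum_fintype, Fin.sum_univ_three] using
      (MvPolynomial.le_totalDegree he).trans hp
  let monomial (e : ι → ℕ) (x : ι → R) : R := ∏ i, x i ^ e i
  convert sliceRankLE_sum_of_mem_or (Fintype.piFinset fun _ : ι ↦ p.support) (lowExponents ι D)
    (fun φ ↦ ∏ i, p.coeff (φ i)) monomial monomial monomial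
    (fun φ i ↦ φ i 0) (fun φ i ↦ φ i 1) (fun φ i ↦ φ i 2) fun φ hφ ↦ ?_ using 4 with x y z
  · simp only [MvPolynomial.eval_eq', Fin.prod_univ_three, prod_univ_sum, prod_mul_distrib,
      monomial]
    rfl
  · have hφ (i) := hdeg (φ i) (Fintype.mem_piFinset.mp hφ i)
    have hsum : ∑ i, φ i 0 + ∑ i, φ i 1 + ∑ i, φ i 2 ≤ D * Fintype.card ι := by
      calc ∑ i, φ i 0 + ∑ i, φ i 1 + ∑ i, φ i 2 = ∑ i, (φ i 0 + φ i 1 + φ i 2) := by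
            simp only [sum_add_distrib]
        _ ≤ ∑ _i : ι, D := sum_le_sum fun i _ ↦ hφ i
        _ = D * Fintype.card ι := by simp [mul_comm]
    have hle (i) : φ i 0 ≤ D ∧ φ i 1 ≤ D ∧ φ i 2 ≤ D := by have := hφ i; omega
    simp only [mem_lowExponents, fun i ↦ (hle i).1, fun i ↦ (hle i).2.1, fun i ↦ (hle i).2.2,
      implies_true, true_and]
    omega

open MvPolynomial in
theorem sliceRankLE_ite_add_eq_zero {F : Type*} [Field F] [Fintype F] [DecidableEq F] (a b c : F) :
    SliceRankLE (fun x y z : ι → F ↦ if a • x + b • y + c • z = 0 then (1 : F) else 0)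
      (3 * #(lowExponents ι (Fintype.card F - 1))) := by
  let L : MvPolynomial (Fin 3) F := C a * X 0 + C b * X 1 + C c * X 2
  have hL : L.totalDegree ≤ 1 := by
    have hterm (k : F) (i : Fin 3) : (C k * X i : MvPolynomial (Fin 3) F).totalDegree ≤ 1 := by
      simpa using totalDegree_mul (C k) (X i)
    exact (totalDegree_add _ _).trans
      (max_le ((totalDegree_add _ _).trans (max_le (hterm a 0) (hterm b 1))) (hterm c 2))
  have hp : (1 - L ^ (Fintype.card F - 1)).totalDegree ≤ Fintype.card F - 1 := by
    refine (totalDegree_sub _ _).trans (max_le (by simp) ((totalDegree_pow _ _).trans ?_))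
    exact (Nat.mul_le_mul_left _ hL).trans_eq (mul_one _)
  have hprod : (fun x y z : ι → F ↦ if a • x + b • y + c • z = 0 then (1 : F) else 0) =
      fun x y z ↦ ∏ i, eval ![x i, y i, z i] (1 - L ^ (Fintype.card F - 1)) := by
    ext x y z
    rw [← prod_one_sub_pow_card_sub_one]
    simp [L]
  exact hprod ▸ sliceRankLE_prod_eval hp

/-- Cap sets for the equation `a • x + b • y + c • z = 0`: its only solutions in `S` are constant
triples. That constant triples do solve it, i.e. `a + b + c = 0`, is left as a separate
hypothesis. -/
def IsCapSet {R M : Type*} [Semiring R] [AddCommMonoid M] [Module R M] (a b c : R) (S : Set M) :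
    Prop :=
  ∀ x ∈ S, ∀ y ∈ S, ∀ z ∈ S, a • x + b • y + c • z = 0 → x = y ∧ y = z

theorem IsCapSet.card_le {F : Type*} [Field F] [Fintype F] {a b c : F}
    (habc : a + b + c = 0) {S : Finset (ι → F)} (hS : IsCapSet a b c (S : Set (ι → F))) :
    #S ≤ 3 * #(lowExponents ι (Fintype.card F - 1)) := by
  classical
  rw [← Fintype.card_coe]
  refine SliceRankLE.card_le_of_diagonal (d := fun _ : S ↦ (1 : F)) (fun _ ↦ one_ne_zero) ?_
  convert (sliceRankLE_ite_add_eq_zero a b c).comp Subtype.val Subtype.val Subtype.val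
    using 5 with x y z
  simp only [Subtype.ext_iff]
  refine ⟨?_, hS x x.2 y y.2 z z.2⟩
  rintro ⟨hxy, hyz⟩
  rw [hxy, hyz, ← add_smul, ← add_smul, habc, zero_smul]

theorem exists_isCapSet_card_le_mul {R M : Type*} [Ring R] [IsDomain R] [AddCommGroup M]
    [Module R M] [Module.IsTorsionFree R M] {a b c : R} (hc : c ≠ 0) (habc : a + b + c = 0)
    {V : Finset M} {d : ℕ}
    (hV : ∀ x ∈ V, {y | y ∈ V ∧ ∃ z ∈ V, a • x + b • y + c • z = 0}.ncard ≤ d) :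
    ∃ S ⊆ V, IsCapSet a b c (S : Set M) ∧ #V ≤ (2 * d + 1) * #S := by
  classical
  obtain ⟨S, hSV, hS, hcard⟩ := exists_pairwise_not_card_le_mul
    (fun x y ↦ ∃ z ∈ V, a • x + b • y + c • z = 0) V fun x hx ↦ by
      simpa [← Set.ncard_coe_finset] using hV x hx
  refine ⟨S, hSV, fun x hx y hy z hz hxyz ↦ ?_, hcard⟩
  obtain rfl : x = y := by
    by_contra hne
    exact hS hx hy hne ⟨z, hSV hz, hxyz⟩
  refine ⟨rfl, ?_⟩
  rw [← add_smul, eq_neg_of_add_eq_zero_left habc, neg_smul, neg_add_eq_zero] at hxyz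
  exact smul_right_injective M hc hxyz

theorem ncard_le_of_forall_ncard_solutions_le {F : Type*} [Field F] [Fintype F] {a b c : F}
    (hc : c ≠ 0) (habc : a + b + c = 0) {A A' : Set (ι → F)} (hA' : A' ⊆ A) {d : ℕ}
    (hd : ∀ x ∈ A', {p : (ι → F) × (ι → F) | p.1 ∈ A ∧ p.2 ∈ A ∧
      a • x + b • p.1 + c • p.2 = 0}.ncard ≤ d) :
    A'.ncard ≤ (2 * d + 1) * (3 * #(lowExponents ι (Fintype.card F - 1))) := by
  classical
  have hneighbours : ∀ x ∈ A'.toFinset,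
      {y | y ∈ A'.toFinset ∧ ∃ z ∈ A'.toFinset, a • x + b • y + c • z = 0}.ncard ≤ d := by
    intro x hx
    refine le_trans ?_ (hd x (Set.mem_toFinset.mp hx))
    refine (Set.ncard_le_ncard ?_ (Set.toFinite _)).trans
      (Set.ncard_image_le (f := Prod.fst) (Set.toFinite _))
    rintro y ⟨hy, z, hz, hxyz⟩
    exact ⟨(y, z), ⟨hA' (Set.mem_toFinset.mp hy), hA' (Set.mem_toFinset.mp hz), hxyz⟩, rfl⟩
  obtain ⟨S, -, hS, hcard⟩ := exists_isCapSet_card_le_mul hc habc hneighbours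
  rw [Set.ncard_eq_toFinset_card']
  exact hcard.trans (Nat.mul_le_mul_left _ (hS.card_le habc))

theorem exists_ncard_le_mul_pow_of_forall_ncard_solutions_le (F : Type*) [Field F] [Fintype F] :
    ∃ C : ℝ, 0 < C ∧ C < Fintype.card F ∧ ∀ {n : ℕ} {a b c : F}, c ≠ 0 → a + b + c = 0 →
      ∀ {A A' : Set (Fin n → F)} {B : ℝ}, A' ⊆ A → 0 ≤ B →
        (∀ x ∈ A', ({p : (Fin n → F) × (Fin n → F) | p.1 ∈ A ∧ p.2 ∈ A ∧
          a • x + b • p.1 + c • p.2 = 0}.ncard : ℝ) ≤ B) →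
        (A'.ncard : ℝ) ≤ (2 * B + 1) * (3 * C ^ n) := by
  have hq : 1 < Fintype.card F := Fintype.one_lt_card
  obtain ⟨C, hC₀, hCq, hC⟩ := exists_card_lowExponents_le_pow (Nat.sub_ne_zero_of_lt hq)
  rw [← Nat.cast_add_one, Nat.sub_add_cancel hq.le] at hCq
  refine ⟨C, hC₀, hCq, fun {n a b c} hc habc A A' B hA' hB hsol ↦ ?_⟩
  calc (A'.ncard : ℝ)
      ≤ (2 * ⌊B⌋₊ + 1) * (3 * #(lowExponents (Fin n) (Fintype.card F - 1))) := mod_cast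
        ncard_le_of_forall_ncard_solutions_le hc habc hA' fun x hx ↦ Nat.le_floor (hsol x hx)
    _ ≤ (2 * B + 1) * (3 * C ^ n) := by
        gcongr
        exacts [Nat.floor_le hB, hC n]

end CapSets

theorem exists_pos_rpow_mul_lt {q C r : ℝ} (hq : 0 < q) (hC : C < r) :
    ∃ ε : ℝ, 0 < ε ∧ q ^ ε * C < r := by
  have hcont : Filter.Tendsto (fun ε : ℝ ↦ q ^ ε * C) (nhdsWithin 0 (Set.Ioi 0)) (nhds C) := by
    have := ((Real.continuous_const_rpow hq.ne').mul_const C).tendsto 0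
    simp only [Real.rpow_zero, one_mul] at this
    exact this.mono_left nhdsWithin_le_nhds
  have hpos : ∀ᶠ ε : ℝ in nhdsWithin 0 (Set.Ioi 0), 0 < ε := self_mem_nhdsWithin
  exact (hpos.and (hcont.eventually_lt_const hC)).exists

theorem eventually_mul_pow_le_mul_pow {r s : ℝ} (hr : 0 ≤ r) (hrs : r < s) (k : ℝ) {δ : ℝ}
    (hδ : 0 < δ) : ∀ᶠ n : ℕ in Filter.atTop, k * r ^ n ≤ δ * s ^ n := by
  have hs : 0 < s := hr.trans_lt hrs
  have hlim : Filter.Tendsto (fun n ↦ k * (r / s) ^ n) Filter.atTop (nhds 0) := by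
    simpa using (tendsto_pow_atTop_nhds_zero_of_lt_one (by positivity)
      ((div_lt_one hs).mpr hrs)).const_mul k
  filter_upwards [hlim.eventually_le_const hδ] with n hn
  rwa [div_pow, ← mul_div_assoc, div_le_iff₀ (by positivity)] at hn

theorem ncard_rpow_le_rpow_pow_card {ι α : Type*} [Fintype ι] [Fintype α]
    (A : Set (ι → α)) {ε : ℝ} (hε : 0 ≤ ε) :
    (A.ncard : ℝ) ^ ε ≤ ((Fintype.card α : ℝ) ^ ε) ^ Fintype.card ι := by
  classical
  have hA : (A.ncard : ℝ) ≤ (Fintype.card α : ℝ) ^ Fintype.card ι := by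
    exact_mod_cast A.ncard_le_card.trans_eq (by simp)
  calc (A.ncard : ℝ) ^ ε ≤ ((Fintype.card α : ℝ) ^ Fintype.card ι) ^ ε :=
        Real.rpow_le_rpow (by positivity) hA hε
    _ = _ := by rw [Real.rpow_pow_comm (by positivity)]

/-- **Theorem (almost cap sets are exponentially small).**
There exist `ε > 0` and `c_q < q` such that for every `δ > 0` and all sufficiently
large `n`: every `A ⊆ F_q^n` that is an `(ε,δ)`-cap set for some admissible tuple
`(a, b, c)` (i.e. there is `A' ⊆ A` with `|A'| > δ|A|` such that every `x ∈ A'` has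
fewer than `|A|^ε` pairs `(y,z) ∈ A²` with `ax + by + cz = 0`) satisfies
`|A| ≤ c_q^n`. -/
theorem almost_cap_set_bound {F : Type*} [Field F] [Fintype F] :
    ∃ ε : ℝ, 0 < ε ∧ ∃ cq : ℝ, cq < (Fintype.card F : ℝ) ∧
      ∀ δ : ℝ, 0 < δ → ∃ N : ℕ, ∀ n : ℕ, N ≤ n →
        ∀ A : Set (Fin n → F),
        (∃ a b c : F, a ≠ 0 ∧ b ≠ 0 ∧ c ≠ 0 ∧ a + b + c = 0 ∧
          ∃ A' : Set (Fin n → F), A' ⊆ A ∧ δ * (A.ncard : ℝ) < (A'.ncard : ℝ) ∧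
            ∀ x ∈ A',
              (({p : (Fin n → F) × (Fin n → F) | p.1 ∈ A ∧ p.2 ∈ A ∧
                a • x + b • p.1 + c • p.2 = 0}).ncard : ℝ) < (A.ncard : ℝ) ^ ε) →
        (A.ncard : ℝ) ≤ cq ^ n := by
  have hq : 1 < (Fintype.card F : ℝ) := mod_cast Fintype.one_lt_card
  obtain ⟨C, hC₀, hCq, hC⟩ := exists_ncard_le_mul_pow_of_forall_ncard_solutions_le F
  obtain ⟨ε, hε, hεC⟩ := exists_pos_rpow_mul_lt (one_pos.trans hq) hCq
  obtain ⟨cq, hεcq, hcq⟩ := exists_between hεC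
  refine ⟨ε, hε, cq, hcq, fun δ hδ ↦ ?_⟩
  obtain ⟨N, hN⟩ := Filter.eventually_atTop.mp
    (eventually_mul_pow_le_mul_pow (by positivity) hεcq 9 hδ)
  refine ⟨N, fun n hn A ⟨a, b, c, _, _, hc, habc, A', hA', hδA, hsol⟩ ↦ ?_⟩
  let B : ℝ := ((Fintype.card F : ℝ) ^ ε) ^ n
  have hB : 1 ≤ B := one_le_pow₀ (Real.one_le_rpow hq.le hε.le)
  have hAB : (A.ncard : ℝ) ^ ε ≤ B := by simpa [B] using ncard_rpow_le_rpow_pow_card A hε.le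
  refine le_of_mul_le_mul_left (hδA.le.trans ?_) hδ
  calc (A'.ncard : ℝ) ≤ (2 * B + 1) * (3 * C ^ n) :=
        hC hc habc hA' (by positivity) fun x hx ↦ (hsol x hx).le.trans hAB
    _ ≤ (3 * B) * (3 * C ^ n) := by gcongr; linarith
    _ = 9 * ((Fintype.card F : ℝ) ^ ε * C) ^ n := by ring
    _ ≤ δ * cq ^ n := hN n hn
end

section
/- There exists c_q < q such that for all sufficiently large n the following holds: for every set A ⊆ F_q^n with |A| > c_q^n and every admissible tuple (a,b,c), there exist pairwise distinct x, y, z ∈ A with ax + by + cz = 0. -/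
/-!
The argument is the slice rank form of the Croot–Lev–Pach polynomial method. If `A ⊆ F_q^n` has no
solution with `x`, `y`, `z` distinct, then on `A` the function
`(x, y, z) ↦ ∏ i, (1 - (a xᵢ + b yᵢ + c zᵢ) ^ (q - 1))` is nonzero exactly on the diagonal, so its
slice rank is `|A|`. In each of its monomials one of the three variables has degree at most
`(q - 1) n / 3`, so its slice rank is also at most three times the number of such monomials in one
variable. By a Chernoff bound that number is at most `γ ^ n` for some `γ < q`.
-/

open Finset Module

section SliceSum

variable {R X Y Z : Type*} [CommSemiring R]

/-- The functions of three variables that are a sum `T₁ + T₂ + T₃` where `T₁` lies in `U` as a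
function of `x`, `T₂` in `V` as a function of `y` and `T₃` in `W` as a function of `z`. A function
has slice rank at most `r` when it lies in such a space with `dim U + dim V + dim W ≤ r`; naming the
spaces avoids choosing bases. -/
def sliceSum (U : Submodule R (X → R)) (V : Submodule R (Y → R)) (W : Submodule R (Z → R)) :
    Submodule R (X → Y → Z → R) where
  carrier := {T | ∃ T₁ T₂ T₃ : X → Y → Z → R, (∀ y z, (fun x ↦ T₁ x y z) ∈ U) ∧
    (∀ x z, (fun y ↦ T₂ x y z) ∈ V) ∧ (∀ x y, T₃ x y ∈ W) ∧ T = T₁ + T₂ + T₃}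
  zero_mem' := ⟨0, 0, 0, fun _ _ ↦ U.zero_mem, fun _ _ ↦ V.zero_mem, fun _ _ ↦ W.zero_mem, by simp⟩
  add_mem' := by
    rintro _ _ ⟨S₁, S₂, S₃, hS₁, hS₂, hS₃, rfl⟩ ⟨T₁, T₂, T₃, hT₁, hT₂, hT₃, rfl⟩
    exact ⟨S₁ + T₁, S₂ + T₂, S₃ + T₃, fun y z ↦ U.add_mem (hS₁ y z) (hT₁ y z),
      fun x z ↦ V.add_mem (hS₂ x z) (hT₂ x z), fun x y ↦ W.add_mem (hS₃ x y) (hT₃ x y), by abel⟩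
  smul_mem' := by
    rintro r _ ⟨T₁, T₂, T₃, hT₁, hT₂, hT₃, rfl⟩
    exact ⟨r • T₁, r • T₂, r • T₃, fun y z ↦ U.smul_mem r (hT₁ y z),
      fun x z ↦ V.smul_mem r (hT₂ x z), fun x y ↦ W.smul_mem r (hT₃ x y), by simp only [smul_add]⟩

variable {U : Submodule R (X → R)} {V : Submodule R (Y → R)} {W : Submodule R (Z → R)}

lemma mul_mem_sliceSum_left {u : X → R} (hu : u ∈ U) (f : Y → Z → R) :
    (fun x y z ↦ f y z * u x) ∈ sliceSum U V W :=
  ⟨fun x y z ↦ f y z * u x, 0, 0, fun y z ↦ U.smul_mem (f y z) hu, fun _ _ ↦ V.zero_mem,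
    fun _ _ ↦ W.zero_mem, by simp only [add_zero]⟩

lemma mul_mem_sliceSum_middle {v : Y → R} (hv : v ∈ V) (f : X → Z → R) :
    (fun x y z ↦ f x z * v y) ∈ sliceSum U V W :=
  ⟨0, fun x y z ↦ f x z * v y, 0, fun _ _ ↦ U.zero_mem, fun x z ↦ V.smul_mem (f x z) hv,
    fun _ _ ↦ W.zero_mem, by simp only [zero_add, add_zero]⟩

lemma mul_mem_sliceSum_right {w : Z → R} (hw : w ∈ W) (f : X → Y → R) :
    (fun x y z ↦ f x y * w z) ∈ sliceSum U V W :=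
  ⟨0, 0, fun x y z ↦ f x y * w z, fun _ _ ↦ U.zero_mem, fun _ _ ↦ V.zero_mem,
    fun x y ↦ W.smul_mem (f x y) hw, by simp only [zero_add]⟩

lemma comp_mem_sliceSum_map_funLeft {X' Y' Z' : Type*} {T : X → Y → Z → R}
    (hT : T ∈ sliceSum U V W) (f : X' → X) (g : Y' → Y) (h : Z' → Z) :
    (fun x y z ↦ T (f x) (g y) (h z)) ∈ sliceSum (U.map (LinearMap.funLeft R R f))
      (V.map (LinearMap.funLeft R R g)) (W.map (LinearMap.funLeft R R h)) := by
  obtain ⟨T₁, T₂, T₃, hT₁, hT₂, hT₃, rfl⟩ := hT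
  exact ⟨fun x y z ↦ T₁ (f x) (g y) (h z), fun x y z ↦ T₂ (f x) (g y) (h z),
    fun x y z ↦ T₃ (f x) (g y) (h z), fun y z ↦ ⟨_, hT₁ (g y) (h z), rfl⟩,
    fun x z ↦ ⟨_, hT₂ (f x) (h z), rfl⟩, fun x y ↦ ⟨_, hT₃ (f x) (g y), rfl⟩, rfl⟩

end SliceSum

section Rank

variable {K X Y Z : Type*} [Field K]

lemma exists_mem_finrank_le_card_support [Fintype X] [DecidableEq K] (W : Submodule K (X → K)) :
    ∃ h ∈ W, finrank K W ≤ #{x | h x ≠ 0} := by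
  obtain ⟨h, hW, hmax⟩ := exists_maximalFor_of_wellFoundedGT (· ∈ W)
    (fun h ↦ ({x | h x ≠ 0} : Finset X)) ⟨0, W.zero_mem⟩
  refine ⟨h, hW, ?_⟩
  set S : Finset X := {x | h x ≠ 0} with hS
  let restrict : W →ₗ[K] (S → K) := LinearMap.funLeft K K Subtype.val ∘ₗ W.subtype
  -- An element of `W` vanishing on `S` can be added to `h` without losing support.
  have restrict_injective : Function.Injective restrict := by
    refine (injective_iff_map_eq_zero restrict).2 fun g hg ↦ Subtype.ext (funext fun x ↦ ?_)
    have hg_zero : ∀ x ∈ S, g.1 x = 0 := fun x hx ↦ congrFun hg ⟨x, hx⟩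
    have hS_sub : S ⊆ ({x | (h + g.1) x ≠ 0} : Finset X) := fun x hx ↦ by
      simpa [hg_zero x hx, hS] using hx
    by_contra hgx
    have hxS : x ∉ S := fun hx ↦ hgx (hg_zero x hx)
    have hhx : h x = 0 := by simpa [hS] using hxS
    exact hxS (hmax (W.add_mem hW g.2) hS_sub (by simpa [hhx] using hgx))
  simpa using LinearMap.finrank_le_finrank_of_injective restrict_injective

lemma exists_dotProduct_orthogonal_finrank_add_eq [Fintype X] (W : Submodule K (X → K)) :
    ∃ W' : Submodule K (X → K), (∀ h ∈ W', ∀ w ∈ W, h ⬝ᵥ w = 0) ∧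
      finrank K W + finrank K W' = Fintype.card X := by
  classical
  refine ⟨W.dualAnnihilator.map ((dotProductEquiv K X).symm : _ →ₗ[K] _), ?_, ?_⟩
  · rintro _ ⟨φ, hφ, rfl⟩ w hw
    have h_apply := LinearMap.congr_fun ((dotProductEquiv K X).apply_symm_apply φ) w
    exact h_apply.trans ((Submodule.mem_dualAnnihilator φ).1 hφ w hw)
  · rw [LinearEquiv.finrank_map_eq, Subspace.finrank_add_finrank_dualAnnihilator_eq,
      finrank_fintype_fun_eq_card]

lemma rank_le_finrank_of_col_mem [Finite X] [Fintype Y] {M : Matrix X Y K}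
    {U : Submodule K (X → K)} (hM : ∀ y, M.col y ∈ U) : M.rank ≤ finrank K U := by
  rw [Matrix.rank_eq_finrank_span_cols]
  exact Submodule.finrank_mono (Submodule.span_le.2 (Set.range_subset_iff.2 hM))

lemma rank_add_le_finrank_add_finrank [Finite X] [Fintype Y] {M N : Matrix X Y K}
    {U : Submodule K (X → K)} {V : Submodule K (Y → K)} (hM : ∀ y, M.col y ∈ U)
    (hN : ∀ x, N.row x ∈ V) : (M + N).rank ≤ finrank K U + finrank K V := by
  cases nonempty_fintype X
  let colSpan := Submodule.span K (Set.range N.col)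
  have h_col : ∀ y, (M + N).col y ∈ U ⊔ colSpan := fun y ↦
    Submodule.add_mem_sup (hM y) (Submodule.subset_span ⟨y, rfl⟩)
  calc (M + N).rank ≤ finrank K ↥(U ⊔ colSpan) := rank_le_finrank_of_col_mem h_col
    _ ≤ finrank K U + finrank K colSpan := Submodule.finrank_add_le_finrank_add_finrank _ _
    _ = finrank K U + N.transpose.rank := by
        rw [Matrix.rank_transpose, Matrix.rank_eq_finrank_span_cols]
    _ ≤ finrank K U + finrank K V := by gcongr; exact rank_le_finrank_of_col_mem hN

lemma rank_contraction_le [Finite X] [Fintype Y] [Fintype Z] {U : Submodule K (X → K)}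
    {V : Submodule K (Y → K)} {W : Submodule K (Z → K)} {T : X → Y → Z → K}
    (hT : T ∈ sliceSum U V W) {h : Z → K} (hh : ∀ w ∈ W, h ⬝ᵥ w = 0) :
    (Matrix.of fun x y ↦ h ⬝ᵥ T x y).rank ≤ finrank K U + finrank K V := by
  obtain ⟨T₁, T₂, T₃, hT₁, hT₂, hT₃, rfl⟩ := hT
  have h_split : (Matrix.of fun x y ↦ h ⬝ᵥ (T₁ + T₂ + T₃) x y) =
      Matrix.of (fun x y ↦ h ⬝ᵥ T₁ x y) + Matrix.of fun x y ↦ h ⬝ᵥ T₂ x y := by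
    ext x y
    simp [dotProduct_add, hh _ (hT₃ x y)]
  rw [h_split]
  refine rank_add_le_finrank_add_finrank (fun y ↦ ?_) fun x ↦ ?_
  · convert U.sum_mem fun z (_ : z ∈ univ) ↦ U.smul_mem (h z) (hT₁ y z) using 1
    ext x
    simp [dotProduct]
  · convert V.sum_mem fun z (_ : z ∈ univ) ↦ V.smul_mem (h z) (hT₂ x z) using 1
    ext y
    simp [dotProduct]

/-- Tao's lemma. Contracting `T` with a vector of large support that is orthogonal to `W` leaves a
diagonal matrix, whose rank is the size of that support. -/
theorem card_le_of_diagonal_mem_sliceSum [Fintype X] {U V W : Submodule K (X → K)}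
    {T : X → X → X → K} (hT : T ∈ sliceSum U V W)
    (hdiag : ∀ x y z, T x y z ≠ 0 ↔ x = y ∧ y = z) :
    Fintype.card X ≤ finrank K U + finrank K V + finrank K W := by
  classical
  obtain ⟨W', hW', hcard⟩ := exists_dotProduct_orthogonal_finrank_add_eq W
  obtain ⟨h, hh, hsupp⟩ := exists_mem_finrank_le_card_support W'
  have h_diagonal : (Matrix.of fun x y ↦ h ⬝ᵥ T x y) = Matrix.diagonal fun x ↦ h x * T x x x := by
    ext x y
    rw [Matrix.of_apply, Matrix.diagonal_apply, dotProduct,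
      sum_eq_single x (fun z _ hz ↦ ?_) (by simp)]
    · split_ifs with hxy
      · rw [hxy]
      · rw [not_not.1 ((hdiag x y x).not.2 fun h ↦ hxy h.1), mul_zero]
    · rw [not_not.1 ((hdiag x y z).not.2 fun h ↦ hz (h.1.trans h.2).symm), mul_zero]
  have h_ne : ∀ x, T x x x ≠ 0 := fun x ↦ (hdiag x x x).2 ⟨rfl, rfl⟩
  have h_rank : #{x | h x ≠ 0} ≤ finrank K U + finrank K V := by
    simpa [h_diagonal, Matrix.rank_diagonal, Fintype.card_subtype, h_ne] using
      rank_contraction_le hT (hW' h hh)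
  omega

end Rank

section LowDegree

variable {ι : Type*} [Fintype ι] [DecidableEq ι]

variable (ι) in
/-- The exponents of the monomials, in variables indexed by `ι`, of degree at most `d` in each
variable and of total degree at most `d * |ι| / k`. -/
def lowDegreeExponents (k d : ℕ) : Finset (ι → ℕ) :=
  {e ∈ Fintype.piFinset fun _ ↦ range (d + 1) | k * ∑ i, e i ≤ d * Fintype.card ι}

lemma exists_mem_lowDegreeExponents {κ : Type*} [Fintype κ] [Nonempty κ] {d : ℕ} {e : κ → ι → ℕ}
    (he : ∀ i, ∑ s, e s i ≤ d) : ∃ s, e s ∈ lowDegreeExponents ι (Fintype.card κ) d := by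
  have h_total : ∑ s, Fintype.card κ * ∑ i, e s i ≤ ∑ _s : κ, d * Fintype.card ι :=
    calc ∑ s, Fintype.card κ * ∑ i, e s i
        = Fintype.card κ * ∑ i, ∑ s, e s i := by rw [← mul_sum, sum_comm]
      _ ≤ Fintype.card κ * ∑ _i : ι, d := by gcongr with i; exact he i
      _ = ∑ _s : κ, d * Fintype.card ι := by simp [mul_comm]
  obtain ⟨s, -, hs⟩ := exists_le_of_sum_le univ_nonempty h_total
  refine ⟨s, mem_filter.2 ⟨Fintype.mem_piFinset.2 fun i ↦ mem_range_succ_iff.2 ?_, hs⟩⟩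
  exact (single_le_sum (fun s _ ↦ Nat.zero_le (e s i)) (mem_univ s)).trans (he i)

lemma card_lowDegreeExponents_mul_pow_le (k d : ℕ) {t : ℝ} (ht₀ : 0 ≤ t) (ht₁ : t ≤ 1) :
    #(lowDegreeExponents ι k d) * t ^ (d * Fintype.card ι) ≤
      (∑ j ∈ range (d + 1), t ^ (k * j)) ^ Fintype.card ι :=
  calc #(lowDegreeExponents ι k d) * t ^ (d * Fintype.card ι)
      = ∑ _e ∈ lowDegreeExponents ι k d, t ^ (d * Fintype.card ι) := by
        rw [sum_const, nsmul_eq_mul]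
    _ ≤ ∑ e ∈ lowDegreeExponents ι k d, ∏ i, t ^ (k * e i) := by
        refine sum_le_sum fun e he ↦ ?_
        rw [prod_pow_eq_pow_sum, ← mul_sum]
        exact pow_le_pow_of_le_one ht₀ ht₁ (mem_filter.1 he).2
    _ ≤ ∑ e ∈ Fintype.piFinset fun _ : ι ↦ range (d + 1), ∏ i, t ^ (k * e i) :=
        sum_le_sum_of_subset_of_nonneg (filter_subset _ _) fun _ _ _ ↦ by positivity
    _ = (∑ j ∈ range (d + 1), t ^ (k * j)) ^ Fintype.card ι := by
        rw [← prod_univ_sum (fun _ : ι ↦ range (d + 1)) fun _ j ↦ t ^ (k * j), prod_const,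
          card_univ]

/-- Both sides agree at `t = 1`, where the left one has the larger derivative, `k * d * (d + 1) / 2`
against `d * (d + 1)`. -/
lemma exists_sum_pow_lt_mul_pow {k d : ℕ} (hk : 2 < k) (hd : 0 < d) :
    ∃ t : ℝ, 0 < t ∧ t < 1 ∧ ∑ j ∈ range (d + 1), t ^ (k * j) < (d + 1) * t ^ d := by
  let G : ℝ → ℝ := fun t ↦ ∑ j ∈ range (d + 1), t ^ (k * j) - (d + 1) * t ^ d
  have hG_one : G 1 = 0 := by simp [G]
  have hG_deriv : HasDerivAt G (k * ∑ j ∈ range (d + 1), (j : ℝ) - (d + 1) * d) 1 := by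
    have h_sum := HasDerivAt.fun_sum fun j (_ : j ∈ range (d + 1)) ↦
      hasDerivAt_pow (k * j) (1 : ℝ)
    refine (h_sum.sub ((hasDerivAt_pow d 1).const_mul ((d : ℝ) + 1))).congr_deriv ?_
    simp [mul_sum]
  have h_gauss : (∑ j ∈ range (d + 1), (j : ℝ)) * 2 = (d + 1) * d := by
    rw [← Nat.cast_sum]
    exact_mod_cast sum_range_id_mul_two (d + 1)
  have h_deriv_pos : 0 < deriv G 1 := by
    have hk' : (2 : ℝ) < k := by exact_mod_cast hk
    have hd' : (0 : ℝ) < (d + 1) * d := by positivity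
    rw [hG_deriv.deriv]
    nlinarith
  have h_sign := eventually_nhdsWithin_sign_eq_of_deriv_pos h_deriv_pos hG_one
  have h_pos : ∀ᶠ t : ℝ in nhds 1, 0 < t := lt_mem_nhds one_pos
  obtain ⟨t, ⟨ht_sign, ht_pos⟩, ht_lt⟩ :=
    (((h_sign.and h_pos).filter_mono nhdsWithin_le_nhds).and
      (self_mem_nhdsWithin (s := Set.Iio (1 : ℝ)))).exists
  rw [sign_neg (sub_neg.2 ht_lt), sign_eq_neg_one_iff] at ht_sign
  exact ⟨t, ht_pos, ht_lt, sub_neg.1 ht_sign⟩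

lemma exists_card_lowDegreeExponents_le_pow {k d : ℕ} (hk : 2 < k) (hd : 0 < d) :
    ∃ γ : ℝ, 0 ≤ γ ∧ γ < d + 1 ∧ ∀ n, #(lowDegreeExponents (Fin n) k d) ≤ γ ^ n := by
  obtain ⟨t, ht₀, ht₁, ht⟩ := exists_sum_pow_lt_mul_pow hk hd
  refine ⟨(∑ j ∈ range (d + 1), t ^ (k * j)) / t ^ d, by positivity,
    (div_lt_iff₀ (by positivity)).2 ht, fun n ↦ ?_⟩
  rw [div_pow, le_div_iff₀ (by positivity), ← pow_mul]
  simpa using card_lowDegreeExponents_mul_pow_le (ι := Fin n) k d ht₀.le ht₁.le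

variable (ι) in
/-- The functions on `ι → R` spanned by the monomials with exponents in `lowDegreeExponents`. -/
def lowDegreeSpan (R : Type*) [CommSemiring R] (k d : ℕ) : Submodule R ((ι → R) → R) :=
  Submodule.span R (Set.range fun (e : lowDegreeExponents ι k d) x ↦ ∏ i, x i ^ e.1 i)

lemma monomial_mem_lowDegreeSpan {R : Type*} [CommSemiring R] {k d : ℕ} {e : ι → ℕ}
    (he : e ∈ lowDegreeExponents ι k d) : (fun x ↦ ∏ i, x i ^ e i) ∈ lowDegreeSpan ι R k d :=
  Submodule.subset_span ⟨⟨e, he⟩, rfl⟩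

lemma finrank_map_lowDegreeSpan_le {K M : Type*} [Field K] [AddCommGroup M] [Module K M] (k d : ℕ)
    (f : ((ι → K) → K) →ₗ[K] M) :
    finrank K ((lowDegreeSpan ι K k d).map f) ≤ #(lowDegreeExponents ι k d) := by
  have : FiniteDimensional K (lowDegreeSpan ι K k d) :=
    FiniteDimensional.span_of_finite K (Set.finite_range _)
  calc finrank K ((lowDegreeSpan ι K k d).map f)
      ≤ finrank K (lowDegreeSpan ι K k d) := Submodule.finrank_map_le f _
    _ ≤ Fintype.card (lowDegreeExponents ι k d) := finrank_range_le_card _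
    _ = #(lowDegreeExponents ι k d) := Fintype.card_coe _

/-- The Croot–Lev–Pach observation: in each monomial of the product, one of the three blocks of
variables has at most a third of the total degree. -/
theorem prod_eval_mem_sliceSum {R : Type*} [CommSemiring R] {d : ℕ} {P : MvPolynomial (Fin 3) R}
    (hP : P.totalDegree ≤ d) :
    (fun x y z : ι → R ↦ ∏ i, P.eval ![x i, y i, z i]) ∈
      sliceSum (lowDegreeSpan ι R 3 d) (lowDegreeSpan ι R 3 d) (lowDegreeSpan ι R 3 d) := by
  let m (e : ι → ℕ) (x : ι → R) : R := ∏ i, x i ^ e i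
  have h_expand : (fun x y z : ι → R ↦ ∏ i, P.eval ![x i, y i, z i]) =
      ∑ p ∈ Fintype.piFinset fun _ : ι ↦ P.support, (∏ i, P.coeff (p i)) •
        fun x y z ↦ m (p · 0) x * m (p · 1) y * m (p · 2) z := by
    ext x y z
    simp only [MvPolynomial.eval_eq', prod_univ_sum, Fin.prod_univ_three, Finset.sum_apply,
      Pi.smul_apply, smul_eq_mul, m, ← prod_mul_distrib, Matrix.cons_val]
  rw [h_expand]
  refine Submodule.sum_mem _ fun p hp ↦ Submodule.smul_mem _ _ ?_
  have h_degree : ∀ i, ∑ s, p i s ≤ d := fun i ↦ by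
    rw [← Finsupp.sum_fintype (p i) (fun _ e ↦ e) fun _ ↦ rfl]
    exact (MvPolynomial.le_totalDegree (Fintype.mem_piFinset.1 hp i)).trans hP
  obtain ⟨s, hs⟩ : ∃ s, (p · s) ∈ lowDegreeExponents ι 3 d := by
    simpa only [Fintype.card_fin] using exists_mem_lowDegreeExponents h_degree
  have h_low : m (p · s) ∈ lowDegreeSpan ι R 3 d := monomial_mem_lowDegreeSpan hs
  fin_cases s
  · convert mul_mem_sliceSum_left h_low fun y z ↦ m (p · 1) y * m (p · 2) z using 4
    exact (mul_assoc _ _ _).trans (mul_comm _ _)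
  · convert mul_mem_sliceSum_middle h_low fun x z ↦ m (p · 0) x * m (p · 2) z using 4
    exact mul_right_comm _ _ _
  · exact mul_mem_sliceSum_right h_low fun x y ↦ m (p · 0) x * m (p · 1) y

lemma prod_one_sub_pow_mem_sliceSum {R : Type*} [CommRing R] (a b c : R) (d : ℕ) :
    (fun x y z : ι → R ↦ ∏ i, (1 - (a • x + b • y + c • z) i ^ d)) ∈
      sliceSum (lowDegreeSpan ι R 3 d) (lowDegreeSpan ι R 3 d) (lowDegreeSpan ι R 3 d) := by
  let L : MvPolynomial (Fin 3) R := .C a * .X 0 + .C b * .X 1 + .C c * .X 2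
  have hL : L.IsHomogeneous 1 := ((MvPolynomial.isHomogeneous_C_mul_X a 0).add
    (MvPolynomial.isHomogeneous_C_mul_X b 1)).add (MvPolynomial.isHomogeneous_C_mul_X c 2)
  have h_degree : (1 - L ^ d).totalDegree ≤ d := by
    refine (MvPolynomial.totalDegree_sub _ _).trans (max_le (by simp) ?_)
    simpa only [one_mul] using (hL.pow d).totalDegree_le
  simpa [L] using prod_eval_mem_sliceSum (ι := ι) h_degree

end LowDegree

section SolutionFree

lemma prod_one_sub_pow_card_sub_one_ne_zero_iff {ι F : Type*} [Fintype ι] [Field F] [Fintype F]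
    {v : ι → F} : ∏ i, (1 - v i ^ (Fintype.card F - 1)) ≠ 0 ↔ v = 0 := by
  have h_factor : ∀ r : F, 1 - r ^ (Fintype.card F - 1) ≠ 0 ↔ r = 0 := fun r ↦ by
    refine ⟨fun h ↦ ?_, fun h ↦ ?_⟩
    · by_contra hr
      exact h (by rw [FiniteField.pow_card_sub_one_eq_one r hr, sub_self])
    · rw [h, zero_pow (Nat.sub_ne_zero_of_lt Fintype.one_lt_card), sub_zero]
      exact one_ne_zero
  simp only [prod_ne_zero_iff, mem_univ, true_imp_iff, h_factor, funext_iff, Pi.zero_apply]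

theorem ncard_le_of_smul_add_smul_add_smul_eq_zero_iff {ι F : Type*} [Fintype ι] [DecidableEq ι]
    [Field F] [Fintype F] {a b c : F} {A : Set (ι → F)}
    (hA : ∀ x ∈ A, ∀ y ∈ A, ∀ z ∈ A, a • x + b • y + c • z = 0 ↔ x = y ∧ y = z) :
    A.ncard ≤ 3 * #(lowDegreeExponents ι 3 (Fintype.card F - 1)) := by
  classical
  have h_mem := comp_mem_sliceSum_map_funLeft
    (prod_one_sub_pow_mem_sliceSum (ι := ι) a b c (Fintype.card F - 1))
    ((↑) : A → ι → F) ((↑) : A → ι → F) ((↑) : A → ι → F)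
  have h_card := card_le_of_diagonal_mem_sliceSum h_mem fun x y z ↦ by
    rw [prod_one_sub_pow_card_sub_one_ne_zero_iff, hA x x.2 y y.2 z z.2, Subtype.coe_inj,
      Subtype.coe_inj]
  have h_rank := finrank_map_lowDegreeSpan_le (ι := ι) 3 (Fintype.card F - 1)
    (LinearMap.funLeft F F ((↑) : A → ι → F))
  calc A.ncard = Fintype.card A := by rw [← Nat.card_coe_set_eq, Nat.card_eq_fintype_card]
    _ ≤ _ := h_card
    _ ≤ 3 * #(lowDegreeExponents ι 3 (Fintype.card F - 1)) := by omega

variable {K V : Type*} [DivisionRing K] [AddCommGroup V] [Module K V] {a b c : K} {x y z : V}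

lemma eq_of_smul_add_smul_add_smul_eq_zero (hc : c ≠ 0) (habc : a + b + c = 0)
    (h : a • x + b • x + c • z = 0) : x = z := by
  have h_smul : c • z = c • x := by
    rw [← add_smul, eq_neg_of_add_eq_zero_left habc, neg_smul] at h
    exact (neg_add_eq_zero.1 h).symm
  exact (smul_right_injective V hc h_smul).symm

lemma smul_add_smul_add_smul_eq_zero_iff_of_imp (ha : a ≠ 0) (hb : b ≠ 0) (hc : c ≠ 0)
    (habc : a + b + c = 0) (h : a • x + b • y + c • z = 0 → x = y ∨ y = z ∨ x = z) :
    a • x + b • y + c • z = 0 ↔ x = y ∧ y = z := by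
  refine ⟨fun h_eq ↦ ?_, ?_⟩
  · obtain rfl | rfl | rfl := h h_eq
    · exact ⟨rfl, eq_of_smul_add_smul_add_smul_eq_zero hc habc h_eq⟩
    · have habc' : b + c + a = 0 := by rw [← habc]; abel
      have h_eq' : b • y + c • y + a • x = 0 := by rw [← h_eq]; abel
      exact ⟨(eq_of_smul_add_smul_add_smul_eq_zero ha habc' h_eq').symm, rfl⟩
    · have habc' : a + c + b = 0 := by rw [← habc]; abel
      have h_eq' : a • x + c • x + b • y = 0 := by rw [← h_eq]; abel
      have hxy := eq_of_smul_add_smul_add_smul_eq_zero hb habc' h_eq'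
      exact ⟨hxy, hxy.symm⟩
  · rintro ⟨rfl, rfl⟩
    rw [← add_smul, ← add_smul, habc, zero_smul]

end SolutionFree

lemma exists_lt_forall_mul_pow_le_pow (C : ℝ) {γ q : ℝ} (hγ : 0 ≤ γ) (hγq : γ < q) :
    ∃ c < q, ∃ N : ℕ, ∀ n ≥ N, C * γ ^ n ≤ c ^ n := by
  obtain ⟨c, hγc, hcq⟩ := exists_between hγq
  have h_bound := ((isLittleO_pow_pow_of_lt_left hγ hγc).const_mul_left C).bound one_pos
  obtain ⟨N, hN⟩ := Filter.eventually_atTop.1 h_bound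
  refine ⟨c, hcq, N, fun n hn ↦ (le_abs_self _).trans ?_⟩
  simpa [abs_of_nonneg (hγ.trans hγc.le)] using hN n hn

/-- **Theorem (large sets contain nondegenerate solutions).**
There exists `c_q < q` such that for all sufficiently large `n`: for every
`A ⊆ F_q^n` with `|A| > c_q^n` and every admissible tuple `(a, b, c)` (i.e.
`a, b, c ≠ 0` and `a + b + c = 0`), there exist pairwise distinct `x, y, z ∈ A`
with `ax + by + cz = 0`. -/
theorem large_set_has_distinct_solution {F : Type*} [Field F] [Fintype F] :
    ∃ cq : ℝ, cq < (Fintype.card F : ℝ) ∧ ∃ N : ℕ, ∀ n : ℕ, N ≤ n →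
      ∀ A : Set (Fin n → F), cq ^ n < (A.ncard : ℝ) →
      ∀ a b c : F, a ≠ 0 → b ≠ 0 → c ≠ 0 → a + b + c = 0 →
        ∃ x ∈ A, ∃ y ∈ A, ∃ z ∈ A,
          x ≠ y ∧ y ≠ z ∧ x ≠ z ∧ a • x + b • y + c • z = 0 := by
  have hF : 1 < Fintype.card F := Fintype.one_lt_card
  obtain ⟨γ, hγ₀, hγ, h_low⟩ := exists_card_lowDegreeExponents_le_pow (k := 3) (by norm_num)
    (Nat.sub_pos_of_lt hF)
  rw [Nat.cast_pred Fintype.card_pos, sub_add_cancel] at hγ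
  obtain ⟨cq, hcq, N, hN⟩ := exists_lt_forall_mul_pow_le_pow 3 hγ₀ hγ
  refine ⟨cq, hcq, N, fun n hn A hA a b c ha hb hc habc ↦ ?_⟩
  by_contra! h_none
  have h_ncard := ncard_le_of_smul_add_smul_add_smul_eq_zero_iff fun x hx y hy z hz ↦
    smul_add_smul_add_smul_eq_zero_iff_of_imp ha hb hc habc fun h_eq ↦ by
      by_contra! h_ne
      exact h_none x hx y hy z hz h_ne.1 h_ne.2.1 h_ne.2.2 h_eq
  refine hA.not_ge ?_
  calc (A.ncard : ℝ) ≤ 3 * #(lowDegreeExponents (Fin n) 3 (Fintype.card F - 1)) := by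
        exact_mod_cast h_ncard
    _ ≤ 3 * γ ^ n := by gcongr; exact h_low n
    _ ≤ cq ^ n := hN n hn
end
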